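/- Let d_1, …, d_k and f_1, …, f_m be digits from D = {0, 1, −1, i, −i} such that the number of nonzero terms among d_1, …, d_k equals the number of nonzero terms among f_1, …, f_m. If the row vector e A_{d_1} A_{d_2} ⋯ A_{d_k} is strictly majorised by e A_{f_1} A_{f_2} ⋯ A_{f_m} (i.e., e A_{d_1} ⋯ A_{d_k} ≺ e A_{f_1} ⋯ A_{f_m}), then for every choice of further digits d_{k+1}, …, d_n ∈ D, writing N for the total number of nonzero terms among d_1, …, d_n, there exists a sequence h_1, …, h_p ∈ D with exactly N nonzero terms such that e A_{d_1} ⋯ A_{d_n} eᵀ < e A_{h_1} ⋯ A_{h_p} eᵀ. -/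

import Mathlib

/-!
The set `𝒫` acts on the digits: `R` turns the digit `d` into `i d`, and `C` turns `d` into
`i conj d`. Precisely, for `P ∈ 𝒫` and a digit `d` there are `Q ∈ 𝒫` and a digit `d'`, zero exactly
when `d` is, with `A_d Q = P A_{d'}`. Since `A_d R = R A_{i d}` and `R C R = C`, for nonzero digits
the relation for `C` follows from the single instance `A_1 C R = C A_i`; for the digit `0` it reads
`A_0 C R³ = C A_0`.

The matrices `A_d` are nonnegative with top left entry `1`, so from `u P ≤ v`, strict in the first
coordinate, one gets `u A_d Q = u P A_{d'} ≤ v A_{d'}`, again strict in the first coordinate.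
Thus `u ≺ v` gives `u A_d ≺ v A_{d'}`, and a whole continuation can be appended digit by digit.
As the elements of `𝒫` fix the first coordinate, `u ≺ v` implies `u eᵀ < v eᵀ`.
-/

open Matrix

noncomputable section

/-- The imaginary unit `i` in the Gaussian integers. -/
def gI : GaussianInt := ⟨0, 1⟩

/-- The base `β = i - 1`. -/
def gβ : GaussianInt := ⟨-1, 1⟩

/-- The digit set `D = {0, 1, -1, i, -i}`. -/
def gD : Set GaussianInt := {0, 1, -1, gI, -gI}

/-- Value of a digit string `d_{n-1} ⋯ d_0`, given as a list with the least
significant digit first: `gval [d_0, d_1, …, d_{n-1}] = Σ d_j β^j`. -/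
def gval (l : List GaussianInt) : GaussianInt :=
  l.foldr (fun d acc => d + gβ * acc) 0

/-- `l` (least significant digit first) is a `(β, D)`-representation of `x`. -/
def gIsRep (x : GaussianInt) (l : List GaussianInt) : Prop :=
  (∀ d ∈ l, d ∈ gD) ∧ gval l = x

/-- A representation is normalized if it is empty or its leading digit
(the last entry of the LSD-first list) is nonzero. -/
def gNormalized (l : List GaussianInt) : Prop := l.getLast? ≠ some 0

/-- Number of nonzero digits (Hamming weight). -/
def gweight (l : List GaussianInt) : ℕ := (l.filter (fun d => d ≠ 0)).length

/-- The row vector `e = (1,0,0,0,0,0,0,0,0)`. -/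
def e9 : Matrix (Fin 1) (Fin 9) ℤ := !![1,0,0,0,0,0,0,0,0]

/-- The permutation matrix `R = diag(1, P1, P1)`. -/
def R9 : Matrix (Fin 9) (Fin 9) ℤ :=
  !![1,0,0,0,0,0,0,0,0;
     0,0,1,0,0,0,0,0,0;
     0,0,0,1,0,0,0,0,0;
     0,0,0,0,1,0,0,0,0;
     0,1,0,0,0,0,0,0,0;
     0,0,0,0,0,0,1,0,0;
     0,0,0,0,0,0,0,1,0;
     0,0,0,0,0,0,0,0,1;
     0,0,0,0,0,1,0,0,0]

/-- The matrix `A_1`. -/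
def A1 : Matrix (Fin 9) (Fin 9) ℤ :=
  !![1,1,0,0,0,0,0,0,0;
     0,0,0,0,0,0,0,0,0;
     2,0,1,1,0,0,1,0,0;
     2,0,0,1,1,0,0,1,0;
     0,0,0,0,0,0,0,0,0;
     0,0,0,0,0,0,0,0,0;
     1,0,0,1,0,0,0,0,0;
     0,0,0,0,0,0,0,0,0;
     0,0,0,0,0,0,0,0,0]

/-- The matrix `A_0`. -/
def A0 : Matrix (Fin 9) (Fin 9) ℤ :=
  !![1,0,0,0,0,0,0,0,0;
     0,0,0,0,0,0,1,0,0;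
     0,0,0,0,0,0,0,1,0;
     0,0,0,0,0,0,0,0,1;
     0,0,0,0,0,1,0,0,0;
     0,0,0,0,0,0,0,0,0;
     0,0,0,0,0,0,0,0,0;
     0,0,0,0,0,0,0,0,0;
     0,0,0,0,0,0,0,0,0]

/-- The matrix `A_i = Rᵀ A_1 R`. -/
def Ai : Matrix (Fin 9) (Fin 9) ℤ := R9ᵀ * A1 * R9

/-- The matrix `A_{-1} = Rᵀ A_i R`. -/
def Am1 : Matrix (Fin 9) (Fin 9) ℤ := R9ᵀ * Ai * R9

/-- The matrix `A_{-i} = Rᵀ A_{-1} R`. -/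
def Ami : Matrix (Fin 9) (Fin 9) ℤ := R9ᵀ * Am1 * R9

/-- The matrix `A_d` associated with a digit `d ∈ D`. -/
def Amat (d : GaussianInt) : Matrix (Fin 9) (Fin 9) ℤ :=
  if d = 0 then A0
  else if d = 1 then A1
  else if d = gI then Ai
  else if d = -1 then Am1
  else Ami

/-- The permutation matrix `C = diag(1, P2, P3)`. -/
def C9 : Matrix (Fin 9) (Fin 9) ℤ :=
  !![1,0,0,0,0,0,0,0,0;
     0,1,0,0,0,0,0,0,0;
     0,0,0,0,1,0,0,0,0;
     0,0,0,1,0,0,0,0,0;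
     0,0,1,0,0,0,0,0,0;
     0,0,0,0,0,0,0,0,1;
     0,0,0,0,0,0,0,1,0;
     0,0,0,0,0,0,1,0,0;
     0,0,0,0,0,1,0,0,0]

/-- The group `𝒫 = {R^k, C R^k : k = 0,1,2,3}` of permutation matrices. -/
def Pgrp : Set (Matrix (Fin 9) (Fin 9) ℤ) :=
  {M | ∃ k : Fin 4, M = R9 ^ (k : ℕ) ∨ M = C9 * R9 ^ (k : ℕ)}

/-- `u ≼ v` : `u` is majorised by `v`. -/
def gmaj (u v : Matrix (Fin 1) (Fin 9) ℤ) : Prop :=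
  ∃ P ∈ Pgrp, ∀ j, (u * P) 0 j ≤ v 0 j

/-- `u ≺ v` : `u` is strictly majorised by `v`. -/
def gsmaj (u v : Matrix (Fin 1) (Fin 9) ℤ) : Prop :=
  ∃ P ∈ Pgrp, (∀ j, (u * P) 0 j ≤ v 0 j) ∧ (u * P) 0 0 < v 0 0

/-- `u ∼ v` : `u ≼ v` and `v ≼ u`. -/
def geqv (u v : Matrix (Fin 1) (Fin 9) ℤ) : Prop := gmaj u v ∧ gmaj v u

section OrderedSemiring

variable {l m n α : Type*} [Fintype m] [Semiring α] [PartialOrder α]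

lemma mul_apply_nonneg [IsOrderedRing α] {M : Matrix l m α} {N : Matrix m n α} {i : l} {j : n}
    (hM : ∀ k, 0 ≤ M i k) (hN : ∀ k, 0 ≤ N k j) : 0 ≤ (M * N) i j :=
  dotProduct_nonneg_of_nonneg hM hN

lemma mul_apply_le_mul_apply [IsOrderedRing α] {u v : Matrix l m α} {M : Matrix m n α} {i : l}
    {j : n} (huv : ∀ k, u i k ≤ v i k) (hM : ∀ k, 0 ≤ M k j) : (u * M) i j ≤ (v * M) i j :=
  dotProduct_le_dotProduct_of_nonneg_right huv hM

lemma mul_apply_lt_mul_apply [IsStrictOrderedRing α] {u v : Matrix l m α} {M : Matrix m n α}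
    {i : l} {j : n} (huv : ∀ k, u i k ≤ v i k) (hM : ∀ k, 0 ≤ M k j) {k : m}
    (hk : u i k < v i k) (hMk : 0 < M k j) : (u * M) i j < (v * M) i j :=
  Finset.sum_lt_sum (fun k _ ↦ mul_le_mul_of_nonneg_right (huv k) (hM k))
    ⟨k, Finset.mem_univ k, mul_lt_mul_of_pos_right hk hMk⟩

end OrderedSemiring

lemma gweight_append (l l' : List GaussianInt) : gweight (l ++ l') = gweight l + gweight l' := by
  simp only [gweight, List.filter_append, List.length_append]

lemma gweight_cons_congr {d d' : GaussianInt} {l l' : List GaussianInt} (hd : d' = 0 ↔ d = 0)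
    (hl : gweight l' = gweight l) : gweight (d' :: l') = gweight (d :: l) := by
  by_cases h : d = 0 <;> simp_all [gweight]

lemma gI_ne_zero : gI ≠ 0 := by decide

lemma gI_pow_mul_eq_zero (k : ℕ) (x : GaussianInt) : gI ^ k * x = 0 ↔ x = 0 :=
  mul_eq_zero_iff_left (pow_ne_zero k gI_ne_zero)

lemma gI_mul_mem_gD {d : GaussianInt} (hd : d ∈ gD) : gI * d ∈ gD := by
  rcases hd with rfl | rfl | rfl | rfl | rfl <;>
    simp only [gD, Set.mem_insert_iff, Set.mem_singleton_iff] <;> decide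

lemma gI_pow_mul_mem_gD {d : GaussianInt} (hd : d ∈ gD) (k : ℕ) : gI ^ k * d ∈ gD := by
  induction k with
  | zero => simpa only [pow_zero, one_mul] using hd
  | succ k ih => simpa only [pow_succ', mul_assoc] using gI_mul_mem_gD ih

lemma star_mem_gD {d : GaussianInt} (hd : d ∈ gD) : star d ∈ gD := by
  rcases hd with rfl | rfl | rfl | rfl | rfl <;>
    simp only [gD, Set.mem_insert_iff, Set.mem_singleton_iff] <;> decide

lemma zero_mem_gD : 0 ∈ gD := .inl rfl

lemma one_mem_gD : 1 ∈ gD := .inr (.inl rfl)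

lemma gD_induction {p : ∀ d, d ∈ gD → Prop} (zero : p 0 zero_mem_gD) (one : p 1 one_mem_gD)
    (gI_mul : ∀ d hd, p d hd → p (gI * d) (gI_mul_mem_gD hd)) {d : GaussianInt} (hd : d ∈ gD) :
    p d hd := by
  have I := gI_mul _ _ one
  have neg_one := gI_mul _ _ I
  have neg_I := gI_mul _ _ neg_one
  rcases hd with rfl | rfl | rfl | rfl | rfl <;> assumption

lemma R9_mul_transpose : R9 * R9ᵀ = 1 := by decide +kernel

lemma R9_transpose_mul : R9ᵀ * R9 = 1 := mul_eq_one_comm.1 R9_mul_transpose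

lemma isUnit_R9 : IsUnit R9 := .of_mul_eq_one _ R9_mul_transpose

lemma R9_pow_four : R9 ^ 4 = 1 := by decide +kernel

lemma R9_mul_C9_mul_R9 : R9 * C9 * R9 = C9 := by decide +kernel

lemma R9_pow_mem_Pgrp (k : ℕ) : R9 ^ k ∈ Pgrp :=
  ⟨Fin.ofNat 4 k, .inl (pow_eq_pow_mod k R9_pow_four)⟩

lemma C9_mul_R9_pow_mem_Pgrp (k : ℕ) : C9 * R9 ^ k ∈ Pgrp :=
  ⟨Fin.ofNat 4 k, .inr (congrArg (C9 * ·) (pow_eq_pow_mod k R9_pow_four))⟩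

lemma Pgrp_mul_e9_transpose {P : Matrix (Fin 9) (Fin 9) ℤ} (hP : P ∈ Pgrp) :
    P * e9ᵀ = e9ᵀ := by
  obtain ⟨k, rfl | rfl⟩ := hP <;> revert k <;> decide +kernel

lemma mul_e9_transpose_apply {m : Type*} (M : Matrix m (Fin 9) ℤ) (i : m) :
    (M * e9ᵀ) i 0 = M i 0 := by
  simp [mul_apply, Fin.sum_univ_succ, e9]

lemma Pgrp_mul_apply_zero {m : Type*} (M : Matrix m (Fin 9) ℤ) {P : Matrix (Fin 9) (Fin 9) ℤ}
    (hP : P ∈ Pgrp) (i : m) : (M * P) i 0 = M i 0 := by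
  rw [← mul_e9_transpose_apply (M * P), Matrix.mul_assoc, Pgrp_mul_e9_transpose hP,
    mul_e9_transpose_apply]

lemma Amat_zero : Amat 0 = A0 := if_pos rfl

lemma Amat_one : Amat 1 = A1 := rfl

lemma commute_A0_R9 : Commute A0 R9 := show A0 * R9 = R9 * A0 by decide +kernel

lemma Amat_gI_mul {d : GaussianInt} (hd : d ∈ gD) : Amat (gI * d) = R9ᵀ * Amat d * R9 := by
  rcases hd with rfl | rfl | rfl | rfl | rfl
  · rw [mul_zero, Amat_zero, mul_assoc, commute_A0_R9.eq, ← mul_assoc, R9_transpose_mul, one_mul]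
  · rfl
  · rfl
  · rfl
  · have hRt : R9ᵀ ^ 4 = 1 := by rw [← transpose_pow, R9_pow_four, transpose_one]
    calc
      Amat (gI * -gI) = A1 := rfl
      _ = R9ᵀ ^ 4 * A1 * R9 ^ 4 := by rw [hRt, R9_pow_four, one_mul, mul_one]
      _ = R9ᵀ * Ami * R9 := by simp only [Ami, Am1, Ai, pow_succ, pow_zero, one_mul, mul_assoc]

lemma Amat_mul_R9 {d : GaussianInt} (hd : d ∈ gD) : Amat d * R9 = R9 * Amat (gI * d) := by
  rw [Amat_gI_mul hd, mul_assoc R9ᵀ, ← mul_assoc R9, R9_mul_transpose, one_mul]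

lemma Amat_mul_R9_pow {d : GaussianInt} (hd : d ∈ gD) (k : ℕ) :
    Amat d * R9 ^ k = R9 ^ k * Amat (gI ^ k * d) := by
  induction k with
  | zero => simp only [pow_zero, mul_one, one_mul]
  | succ k ih =>
    rw [pow_succ, ← mul_assoc, ih, mul_assoc, Amat_mul_R9 (gI_pow_mul_mem_gD hd k), ← mul_assoc,
      ← mul_assoc gI, ← pow_succ']

lemma A0_mul_C9_mul_R9_pow_three : A0 * (C9 * R9 ^ 3) = C9 * A0 := by decide +kernel

lemma A1_mul_C9_mul_R9 : A1 * (C9 * R9) = C9 * Ai := by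
  unfold Ai
  decide +kernel

lemma Amat_mul_C9_mul_R9 {d : GaussianInt} (hd : d ∈ gD) (hd0 : d ≠ 0) :
    Amat d * (C9 * R9) = C9 * Amat (gI * star d) := by
  induction hd using gD_induction with
  | zero => exact absurd rfl hd0
  | one => exact A1_mul_C9_mul_R9
  | gI_mul d hd ih =>
    -- After multiplication by `R` on both sides, both products equal `C A_{i conj d}`.
    refine isUnit_R9.mul_left_cancel (isUnit_R9.mul_right_cancel ?_)
    have hstar : gI * star (gI * d) = star d := by
      rw [star_mul', ← mul_assoc, show gI * star gI = 1 by decide, one_mul]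
    calc
      R9 * (Amat (gI * d) * (C9 * R9)) * R9 = Amat d * (R9 * C9 * R9) * R9 := by
        simp only [← mul_assoc, Amat_mul_R9 hd]
      _ = C9 * Amat (gI * star d) := by
        rw [R9_mul_C9_mul_R9, mul_assoc, ih (right_ne_zero_of_mul hd0)]
      _ = R9 * C9 * (Amat (star d) * R9) := by
        rw [Amat_mul_R9 (star_mem_gD hd), ← mul_assoc, R9_mul_C9_mul_R9]
      _ = R9 * (C9 * Amat (gI * star (gI * d))) * R9 := by
        simp only [hstar, mul_assoc]

lemma R9_nonneg : ∀ i j, 0 ≤ R9 i j := by simp [R9, Fin.forall_fin_succ]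

lemma A0_nonneg : ∀ i j, 0 ≤ A0 i j := by simp [A0, Fin.forall_fin_succ]

lemma A1_nonneg : ∀ i j, 0 ≤ A1 i j := by simp [A1, Fin.forall_fin_succ]

lemma Amat_nonneg {d : GaussianInt} (hd : d ∈ gD) (i j : Fin 9) : 0 ≤ Amat d i j := by
  induction hd using gD_induction generalizing i j with
  | zero => exact Amat_zero ▸ A0_nonneg i j
  | one => exact A1_nonneg i j
  | gI_mul d hd ih =>
    rw [Amat_gI_mul hd]
    exact mul_apply_nonneg (fun k ↦ mul_apply_nonneg (R9_nonneg · i) (ih · k)) (R9_nonneg · j)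

lemma Amat_zero_zero {d : GaussianInt} (hd : d ∈ gD) : Amat d 0 0 = 1 := by
  induction hd using gD_induction with
  | zero => rfl
  | one => rfl
  | gI_mul d hd ih => simp [Amat_gI_mul hd, mul_apply, Fin.sum_univ_succ, R9, ih]

lemma exists_Amat_mul_eq_mul_Amat {P : Matrix (Fin 9) (Fin 9) ℤ} (hP : P ∈ Pgrp)
    {d : GaussianInt} (hd : d ∈ gD) :
    ∃ d' ∈ gD, (d' = 0 ↔ d = 0) ∧ ∃ Q ∈ Pgrp, Amat d * Q = P * Amat d' := by
  obtain ⟨k, rfl | rfl⟩ := hP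
  · exact ⟨gI ^ (k : ℕ) * d, gI_pow_mul_mem_gD hd k, gI_pow_mul_eq_zero k d, R9 ^ (k : ℕ),
      R9_pow_mem_Pgrp k, Amat_mul_R9_pow hd k⟩
  · rcases eq_or_ne d 0 with rfl | hd0
    · refine ⟨0, hd, Iff.rfl, C9 * R9 ^ (3 + k : ℕ), C9_mul_R9_pow_mem_Pgrp _, ?_⟩
      rw [Amat_zero, pow_add, ← mul_assoc C9, ← mul_assoc, A0_mul_C9_mul_R9_pow_three,
        mul_assoc, (commute_A0_R9.pow_right k).eq, mul_assoc]
    · have hd' : gI * star d ∈ gD := gI_mul_mem_gD (star_mem_gD hd)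
      refine ⟨gI ^ (k : ℕ) * (gI * star d), gI_pow_mul_mem_gD hd' k, ?_,
        C9 * R9 ^ (1 + k : ℕ), C9_mul_R9_pow_mem_Pgrp _, ?_⟩
      · rw [gI_pow_mul_eq_zero, mul_eq_zero_iff_left gI_ne_zero, star_eq_zero]
      · rw [pow_add, pow_one, ← mul_assoc C9, ← mul_assoc, Amat_mul_C9_mul_R9 hd hd0,
          mul_assoc, Amat_mul_R9_pow hd', mul_assoc]

namespace gsmaj

variable {u v : Matrix (Fin 1) (Fin 9) ℤ}

lemma apply_zero_lt (h : gsmaj u v) : u 0 0 < v 0 0 := by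
  obtain ⟨P, hP, -, hlt⟩ := h
  rwa [Pgrp_mul_apply_zero u hP] at hlt

lemma exists_mul_Amat (h : gsmaj u v) {d : GaussianInt} (hd : d ∈ gD) :
    ∃ d' ∈ gD, (d' = 0 ↔ d = 0) ∧ gsmaj (u * Amat d) (v * Amat d') := by
  obtain ⟨P, hP, hle, hlt⟩ := h
  obtain ⟨d', hd', hd0, Q, hQ, hQP⟩ := exists_Amat_mul_eq_mul_Amat hP hd
  have hmove : u * Amat d * Q = u * P * Amat d' := by
    rw [Matrix.mul_assoc, hQP, Matrix.mul_assoc]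
  have hcorner : 0 < Amat d' 0 0 := Amat_zero_zero hd' ▸ one_pos
  refine ⟨d', hd', hd0, Q, hQ, fun j ↦ ?_, ?_⟩ <;> rw [hmove]
  · exact mul_apply_le_mul_apply hle (Amat_nonneg hd' · j)
  · exact mul_apply_lt_mul_apply hle (Amat_nonneg hd' · 0) hlt hcorner

lemma exists_mul_prod (h : gsmaj u v) {ext : List GaussianInt} (hext : ∀ d ∈ ext, d ∈ gD) :
    ∃ l : List GaussianInt, (∀ d ∈ l, d ∈ gD) ∧ gweight l = gweight ext ∧
      gsmaj (u * (ext.map Amat).prod) (v * (l.map Amat).prod) := by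
  induction ext generalizing u v with
  | nil => exact ⟨[], hext, rfl, by simpa using h⟩
  | cons d t ih =>
    obtain ⟨hd, ht⟩ := List.forall_mem_cons.1 hext
    obtain ⟨d', hd', hd0, h'⟩ := h.exists_mul_Amat hd
    obtain ⟨l, hl, hlt, hprod⟩ := ih h' ht
    refine ⟨d' :: l, List.forall_mem_cons.2 ⟨hd', hl⟩, gweight_cons_congr hd0 hlt, ?_⟩
    simpa only [List.map_cons, List.prod_cons, ← Matrix.mul_assoc] using hprod

end gsmaj

/-- If `e A_{d_1} ⋯ A_{d_k}` is strictly majorised by `e A_{f_1} ⋯ A_{f_m}`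
(both digit sequences having the same number of nonzero terms), then for any
continuation `d_{k+1}, …, d_n` the value `e A_{d_1} ⋯ A_{d_n} eᵀ` is beaten by
some digit sequence with the same total number `N` of nonzero terms. -/
theorem stmt13 (dl fl : List GaussianInt)
    (hdl : ∀ d ∈ dl, d ∈ gD) (hfl : ∀ d ∈ fl, d ∈ gD)
    (hw : gweight dl = gweight fl)
    (hmaj : gsmaj (e9 * (dl.map Amat).prod) (e9 * (fl.map Amat).prod))
    (ext : List GaussianInt) (hext : ∀ d ∈ ext, d ∈ gD) :
    ∃ hl : List GaussianInt, (∀ d ∈ hl, d ∈ gD) ∧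
      gweight hl = gweight (dl ++ ext) ∧
      (e9 * ((dl ++ ext).map Amat).prod * e9ᵀ) 0 0 <
        (e9 * (hl.map Amat).prod * e9ᵀ) 0 0 := by
  obtain ⟨l, hl, hweight, h⟩ := hmaj.exists_mul_prod hext
  refine ⟨fl ++ l, List.forall_mem_append.2 ⟨hfl, hl⟩, ?_, ?_⟩
  · rw [gweight_append, gweight_append, hw, hweight]
  · simpa only [mul_e9_transpose_apply, List.map_append, List.prod_append, Matrix.mul_assoc]
      using h.apply_zero_lt
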